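/- Let k ≥ 2 and n_1, …, n_k be positive integers, let t be the number of indices i with n_i odd, and let I_1 = {i : n_i = 1}. If t is odd, t ≥ 3, and |I_1| ≤ (2k − t − 1)/2, then the signed domination number of the complete k-partite graph K_{n_1,…,n_k} equals 3. -/

import Mathlib

open scoped Classical

/-- The signed domination number of a finite simple graph `G`: the minimum weight of a
function `f : V → {−1, 1}` such that `f(N[v]) ≥ 1` for every vertex `v`. -/
noncomputable def signedDomNum {V : Type*} [Fintype V] (G : SimpleGraph V) : ℤ :=
  sInf {w : ℤ | ∃ f : V → ℤ, (∀ v, f v = 1 ∨ f v = -1) ∧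
    (∀ v, 1 ≤ f v + ∑ u ∈ G.neighborFinset v, f u) ∧ w = ∑ v, f v}

/-!
In a complete multipartite graph the closed neighbourhood of `v` is `v` together with all the other
parts, so domination only involves the weight `w` of `f` and the sums `S i` of `f` over the parts:
a part containing a vertex of sign `-1` has `S i ≤ w - 2`, and any other part has `S i = n i ≤ w`.

The weight has the parity of `t`, hence is odd. If `w ≤ 0` then every `S i ≤ w - 2`, which is
incompatible with `∑ S i = w`. If `w = 1` then a part of size `1` has `S i ≤ 1` and, by parity,
any other part has `S i ≤ -1` or `S i ≤ -2` according as its size is odd or even; adding these up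
gives `1 ≤ 2 |I₁| - 2 k + t`. Weight `3` is reached by prescribing `S i = 0` on the even parts
and `S i = ± 1` on the odd ones: then `S i ≤ w - 2` for every part, which is enough for domination.
-/

section

open Finset

/-- A function `α → {-1, 1}`, encoded as an integer-valued function so that it can be summed. -/
def IsSignFunction {α : Type*} (f : α → ℤ) : Prop :=
  ∀ a, f a = 1 ∨ f a = -1

/-- A signed dominating function of `G`; `signedDomNum G` is the least weight `∑ v, f v` of one. -/
structure IsSignedDominating {V : Type*} [Fintype V] (G : SimpleGraph V) (f : V → ℤ) : Prop where
  isSignFunction : IsSignFunction f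
  one_le : ∀ v, 1 ≤ f v + ∑ u ∈ G.neighborFinset v, f u

theorem IsSignedDominating.signedDomNum_eq {V : Type*} [Fintype V] {G : SimpleGraph V} {f : V → ℤ}
    (hf : IsSignedDominating G f)
    (hmin : ∀ g, IsSignedDominating G g → ∑ v, f v ≤ ∑ v, g v) :
    signedDomNum G = ∑ v, f v := by
  refine IsLeast.csInf_eq ⟨⟨f, hf.isSignFunction, hf.one_le, rfl⟩, ?_⟩
  rintro _ ⟨g, hsign, hone, rfl⟩
  exact hmin g ⟨hsign, hone⟩

theorem IsSignFunction.odd_sum_iff {α : Type*} [Fintype α] {f : α → ℤ} (hf : IsSignFunction f) :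
    Odd (∑ a, f a) ↔ Odd (Fintype.card α) := by
  have hdiff : Even (∑ a, (f a - 1)) := Finset.even_sum _ fun a _ => by
    rcases hf a with h | h <;> rw [h] <;> decide
  rwa [sum_sub_distrib, sum_const, nsmul_one, card_univ, Int.even_sub', Int.odd_coe_nat]
    at hdiff

theorem exists_isSignFunction_sum_eq {α : Type*} (s : Finset α) {m : ℤ} (hm : |m| ≤ #s)
    (hpar : Even (m - #s)) : ∃ f : α → ℤ, IsSignFunction f ∧ ∑ a ∈ s, f a = m := by
  obtain ⟨hlower, hupper⟩ := abs_le.mp hm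
  obtain ⟨r, hr⟩ := hpar
  obtain ⟨B, hBs, hB⟩ := exists_subset_card_eq (s := s) (n := (-r).toNat) (by omega)
  have hcard := card_sdiff_add_card_eq_card hBs
  refine ⟨fun a => if a ∈ B then -1 else 1, fun a => by by_cases h : a ∈ B <;> simp [h], ?_⟩
  calc ∑ a ∈ s, (if a ∈ B then -1 else 1 : ℤ)
      = ∑ a ∈ s \ B, (if a ∈ B then -1 else 1 : ℤ) + ∑ a ∈ B, (if a ∈ B then -1 else 1 : ℤ) :=
        (sum_sdiff hBs).symm
    _ = ∑ a ∈ s \ B, 1 + ∑ a ∈ B, -1 :=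
        congrArg₂ _ (sum_congr rfl fun a ha => if_neg (mem_sdiff.mp ha).2)
          (sum_congr rfl fun a ha => if_pos ha)
    _ = #(s \ B) - #B := by simp [sub_eq_add_neg]
    _ = m := by omega

variable {ι : Type*} {V : ι → Type*} [∀ i, Fintype (V i)]

/-- The sum of a vertex function of a complete multipartite graph over the `i`-th part. -/
def partSum {M : Type*} [AddCommMonoid M] (f : (Σ i, V i) → M) (i : ι) : M :=
  ∑ x, f ⟨i, x⟩

theorem exists_isSignFunction_partSum_eq {c : ι → ℤ} (hc : ∀ i, |c i| ≤ Fintype.card (V i))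
    (hpar : ∀ i, Even (c i - Fintype.card (V i))) :
    ∃ f : (Σ i, V i) → ℤ, IsSignFunction f ∧ ∀ i, partSum f i = c i := by
  choose g hsign hsum using fun i =>
    exists_isSignFunction_sum_eq (univ : Finset (V i)) (hc i) (hpar i)
  exact ⟨fun v => g v.1 v.2, fun v => hsign v.1 v.2, hsum⟩

theorem IsSignFunction.odd_partSum_iff {f : (Σ i, V i) → ℤ} (hf : IsSignFunction f) (i : ι) :
    Odd (partSum f i) ↔ Odd (Fintype.card (V i)) :=
  odd_sum_iff fun x => hf ⟨i, x⟩

variable [Fintype ι]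

theorem sum_partSum {M : Type*} [AddCommMonoid M] (f : (Σ i, V i) → M) :
    ∑ i, partSum f i = ∑ v, f v :=
  (Fintype.sum_sigma f).symm

theorem sum_neighborFinset_completeMultipartiteGraph {M : Type*} [AddCommGroup M]
    (f : (Σ i, V i) → M) (v : Σ i, V i)
    [Fintype ((SimpleGraph.completeMultipartiteGraph V).neighborSet v)] :
    ∑ u ∈ (SimpleGraph.completeMultipartiteGraph V).neighborFinset v, f u =
      ∑ u, f u - partSum f v.1 := by
  have hneighbor : (SimpleGraph.completeMultipartiteGraph V).neighborFinset v =
      (univ.erase v.1).sigma fun _ => univ := by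
    ext u
    simp [SimpleGraph.completeMultipartiteGraph, eq_comm]
  rw [hneighbor, sum_sigma, ← sum_partSum f]
  exact sum_erase_eq_sub (mem_univ v.1)

theorem IsSignFunction.odd_weight_iff {f : (Σ i, V i) → ℤ} (hf : IsSignFunction f) :
    Odd (∑ v, f v) ↔ Odd #{i | Odd (Fintype.card (V i))} := by
  rw [hf.odd_sum_iff, Fintype.card_sigma, odd_sum_iff_odd_card_odd]

theorem IsSignFunction.isSignedDominating_of_partSum_le {f : (Σ i, V i) → ℤ}
    (hf : IsSignFunction f) (hle : ∀ i, partSum f i ≤ ∑ v, f v - 2) :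
    IsSignedDominating (SimpleGraph.completeMultipartiteGraph V) f where
  isSignFunction := hf
  one_le v := by
    rw [sum_neighborFinset_completeMultipartiteGraph]
    have hpart := hle v.1
    rcases hf v with hv | hv <;> omega

theorem exists_isSignedDominating_weight_eq {m : ℤ} (hm3 : 3 ≤ m)
    (hmt : m ≤ #{i | Odd (Fintype.card (V i))})
    (hpar : Even (m - #{i | Odd (Fintype.card (V i))})) :
    ∃ f, IsSignedDominating (SimpleGraph.completeMultipartiteGraph V) f ∧ ∑ v, f v = m := by
  obtain ⟨σ, hσ, hσsum⟩ := exists_isSignFunction_sum_eq {i | Odd (Fintype.card (V i))}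
    (abs_le.mpr ⟨by omega, hmt⟩) hpar
  let c : ι → ℤ := fun i => if Odd (Fintype.card (V i)) then σ i else 0
  have hc : ∀ i, |c i| ≤ Fintype.card (V i) ∧ Even (c i - Fintype.card (V i)) ∧ c i ≤ 1 := by
    intro i
    by_cases hi : Odd (Fintype.card (V i))
    · have hcard : (1 : ℤ) ≤ Fintype.card (V i) := by exact_mod_cast hi.pos
      rcases hσ i with h | h <;> simp [c, hi, h, Int.even_sub', hcard]
    · simp [c, hi, Nat.not_odd_iff_even.mp hi]
  obtain ⟨f, hf, hpart⟩ :=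
    exists_isSignFunction_partSum_eq (fun i => (hc i).1) fun i => (hc i).2.1
  have hweight : ∑ v, f v = m := by
    rw [← sum_partSum, ← hσsum, sum_filter]
    exact sum_congr rfl fun i _ => hpart i
  refine ⟨f, hf.isSignedDominating_of_partSum_le fun i => ?_, hweight⟩
  rw [hpart, hweight]
  linarith [(hc i).2.2]

namespace IsSignedDominating

variable [∀ i, Nonempty (V i)] {f : (Σ i, V i) → ℤ}

theorem partSum_le_or_eq_card
    (hf : IsSignedDominating (SimpleGraph.completeMultipartiteGraph V) f) (i : ι) :
    partSum f i ≤ ∑ v, f v - 2 ∨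
      partSum f i = Fintype.card (V i) ∧ (Fintype.card (V i) : ℤ) ≤ ∑ v, f v := by
  have hdom : ∀ x, 1 ≤ f ⟨i, x⟩ + (∑ v, f v - partSum f i) := fun x => by
    simpa only [sum_neighborFinset_completeMultipartiteGraph] using hf.one_le ⟨i, x⟩
  by_cases hneg : ∃ x, f ⟨i, x⟩ = -1
  · obtain ⟨x, hx⟩ := hneg
    have hx' := hdom x
    left
    omega
  · have hone : ∀ x, f ⟨i, x⟩ = 1 := fun x =>
      (hf.isSignFunction _).resolve_right fun hx => hneg ⟨x, hx⟩
    have hsum : partSum f i = Fintype.card (V i) := by simp [partSum, hone]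
    obtain ⟨x⟩ := ‹∀ i, Nonempty (V i)› i
    have hx := hdom x
    rw [hone] at hx
    exact Or.inr ⟨hsum, by omega⟩

theorem weight_pos [Nonempty ι]
    (hf : IsSignedDominating (SimpleGraph.completeMultipartiteGraph V) f) : 0 < ∑ v, f v := by
  by_contra! hw
  have hle : ∀ i, partSum f i ≤ ∑ v, f v - 2 := fun i =>
    (hf.partSum_le_or_eq_card i).resolve_right fun h => by
      have hcard : 0 < Fintype.card (V i) := Fintype.card_pos
      omega
  have hsum : ∑ v, f v ≤ Fintype.card ι * (∑ v, f v - 2) := by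
    simpa [sum_partSum] using sum_le_card_nsmul univ (partSum f) _ fun i _ => hle i
  have hι : (1 : ℤ) ≤ Fintype.card ι := by exact_mod_cast Fintype.card_pos (α := ι)
  nlinarith

theorem partSum_add_two_le_of_weight_eq_one
    (hf : IsSignedDominating (SimpleGraph.completeMultipartiteGraph V) f) (hw : ∑ v, f v = 1)
    (i : ι) :
    partSum f i + 2 ≤ 2 * (if Fintype.card (V i) = 1 then 1 else 0) +
      (if Odd (Fintype.card (V i)) then 1 else 0) := by
  have hcard : 0 < Fintype.card (V i) := Fintype.card_pos
  have hpar := hf.isSignFunction.odd_partSum_iff i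
  simp only [Int.odd_iff, Nat.odd_iff] at hpar ⊢
  rcases hf.partSum_le_or_eq_card i with h | h <;> split_ifs <;> omega

theorem two_mul_card_lt_of_weight_eq_one
    (hf : IsSignedDominating (SimpleGraph.completeMultipartiteGraph V) f) (hw : ∑ v, f v = 1) :
    2 * Fintype.card ι <
      2 * #{i | Fintype.card (V i) = 1} + #{i | Odd (Fintype.card (V i))} := by
  have hsum := sum_le_sum fun i (_ : i ∈ univ) => hf.partSum_add_two_le_of_weight_eq_one hw i
  simp only [sum_add_distrib, sum_partSum, hw, ← mul_sum, sum_boole, sum_const, card_univ,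
    nsmul_eq_mul] at hsum
  omega

theorem three_le_weight (hf : IsSignedDominating (SimpleGraph.completeMultipartiteGraph V) f)
    (hodd : Odd #{i | Odd (Fintype.card (V i))})
    (hsingle : 2 * #{i | Fintype.card (V i) = 1} + #{i | Odd (Fintype.card (V i))} <
      2 * Fintype.card ι) :
    3 ≤ ∑ v, f v := by
  have : Nonempty ι := Fintype.card_pos_iff.mp (by omega)
  have hpos := hf.weight_pos
  have hne : ∑ v, f v ≠ 1 := fun hw => (hf.two_mul_card_lt_of_weight_eq_one hw).not_gt hsingle
  obtain ⟨r, hr⟩ := hf.isSignFunction.odd_weight_iff.mpr hodd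
  omega

end IsSignedDominating

theorem signedDomNum_eq_three_of_few_singletons_general [∀ i, Nonempty (V i)]
    (hodd : Odd #{i | Odd (Fintype.card (V i))}) (hthree : 3 ≤ #{i | Odd (Fintype.card (V i))})
    (hsingle : 2 * #{i | Fintype.card (V i) = 1} + #{i | Odd (Fintype.card (V i))} <
      2 * Fintype.card ι) :
    signedDomNum (SimpleGraph.completeMultipartiteGraph V) = 3 := by
  have hpar : Even ((3 : ℤ) - #{i | Odd (Fintype.card (V i))}) :=
    Odd.sub_odd (by decide) (by exact_mod_cast hodd)
  obtain ⟨f, hf, hweight⟩ :=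
    exists_isSignedDominating_weight_eq le_rfl (by exact_mod_cast hthree) hpar
  rw [hf.signedDomNum_eq fun g hg => hweight ▸ hg.three_le_weight hodd hsingle, hweight]

end

theorem signedDomNum_eq_three_of_few_singletons
    (k : ℕ) (hk : 2 ≤ k) (n : Fin k → ℕ) (hn : ∀ i, 0 < n i)
    (t : ℕ) (ht : t = (Finset.univ.filter fun i => Odd (n i)).card)
    (htodd : Odd t) (ht3 : 3 ≤ t)
    (hI : 2 * ((Finset.univ.filter fun i => n i = 1).card : ℤ) ≤ 2 * (k : ℤ) - (t : ℤ) - 1) :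
    signedDomNum (SimpleGraph.completeMultipartiteGraph fun i : Fin k => Fin (n i)) = 3 := by
  subst ht
  have : ∀ i, Nonempty (Fin (n i)) := fun i => Fin.pos_iff_nonempty.mp (hn i)
  exact signedDomNum_eq_three_of_few_singletons_general (by simpa using htodd)
    (by simpa using ht3) (by simp only [Fintype.card_fin]; omega)
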